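/- Performance difference identity: for any two policies π and π' in the finite discounted MDP setup, V(π') − V(π) = (1/(1−η))·∑_s dπ'(s)·∑_a π'(s,a)·Aπ(s,a), where dπ' is the discounted state visitation distribution of the new policy π' and Aπ is the advantage function of the old policy π. -/

import Mathlib

open scoped BigOperators

/-- Induced transition matrix of a policy. -/
noncomputable def Mmat {S A : Type*} [Fintype A] (P : S → A → S → ℝ) (π : S → A → ℝ) :
    Matrix S S ℝ :=
  fun s s' => ∑ a, π s a * P s a s'

/-- Induced reward vector of a policy. -/
noncomputable def rvec {S A : Type*} [Fintype A] (r : S → A → ℝ) (π : S → A → ℝ) : S → ℝ :=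
  fun s => ∑ a, π s a * r s a

/-- Value function: Vπ(s) = ∑_{t=0}^∞ η^t (Mπ^t rπ)(s). -/
noncomputable def Vval {S A : Type*} [Fintype S] [DecidableEq S] [Fintype A] (P : S → A → S → ℝ)
    (r : S → A → ℝ) (η : ℝ) (π : S → A → ℝ) : S → ℝ :=
  fun s => ∑' t : ℕ, η ^ t * ((Mmat P π ^ t).mulVec (rvec r π)) s

/-- State-action value Qπ(s,a) = r(s,a) + η ∑_{s'} P(s,a,s') Vπ(s'). -/
noncomputable def Qval {S A : Type*} [Fintype S] [DecidableEq S] [Fintype A] (P : S → A → S → ℝ)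
    (r : S → A → ℝ) (η : ℝ) (π : S → A → ℝ) : S → A → ℝ :=
  fun s a => r s a + η * ∑ s', P s a s' * Vval P r η π s'

/-- Advantage Aπ(s,a) = Qπ(s,a) − Vπ(s). -/
noncomputable def Adv {S A : Type*} [Fintype S] [DecidableEq S] [Fintype A] (P : S → A → S → ℝ)
    (r : S → A → ℝ) (η : ℝ) (π : S → A → ℝ) : S → A → ℝ :=
  fun s a => Qval P r η π s a - Vval P r η π s

/-- Discounted state visitation distribution dπ(s) = (1−η) ∑_{t} η^t (μ Mπ^t)(s). -/
noncomputable def dvisit {S A : Type*} [Fintype S] [DecidableEq S] [Fintype A] (P : S → A → S → ℝ)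
    (η : ℝ) (π : S → A → ℝ) (μ : S → ℝ) : S → ℝ :=
  fun s => (1 - η) * ∑' t : ℕ, η ^ t * (Matrix.vecMul μ (Mmat P π ^ t)) s

/-- Total variation distance between probability vectors on a finite type. -/
noncomputable def TV {α : Type*} [Fintype α] (p q : α → ℝ) : ℝ :=
  (1 / 2) * ∑ a, |p a - q a|

/-- KL divergence (for q everywhere positive; terms with p a = 0 contribute 0). -/
noncomputable def KL {α : Type*} [Fintype α] (p q : α → ℝ) : ℝ :=
  ∑ a, p a * Real.log (p a / q a)

/-!
With `M = Mmat P π'` and the resolvent `G = ∑ₜ (η M)ᵗ`, one has `V_π' = G r_π'` and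
`d_π' = (1 - η) μ G`. Since `G (1 - η M) = 1`, pairing `d_π'` with the Bellman residual
`r_π' - (1 - η M) W` of an arbitrary baseline `W` gives `(1 - η) (μ V_π' - μ W)`. The advantage of
`π`, averaged over the actions of `π'`, is this residual for `W = V_π`.
-/

section NeumannSeries

open Matrix

variable {ι m n R : Type*} [NonUnitalNonAssocSemiring R] [TopologicalSpace R]
  [IsTopologicalSemiring R] {f : ι → Matrix m n R} {F : Matrix m n R}

theorem hasSum_mulVec [Fintype n] (hf : HasSum f F) (v : n → R) :
    HasSum (fun i => f i *ᵥ v) (F *ᵥ v) :=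
  hf.map (mulVec.addMonoidHomLeft v) (continuous_id.matrix_mulVec continuous_const)

theorem hasSum_vecMul [Fintype m] (hf : HasSum f F) (v : m → R) :
    HasSum (fun i => v ᵥ* f i) (v ᵥ* F) :=
  hf.map (⟨⟨fun B => v ᵥ* B, vecMul_zero v⟩, fun B C => vecMul_add B C v⟩ : Matrix m n R →+ n → R)
    (continuous_const.matrix_vecMul continuous_id)

theorem summable_smul_pow_of_mem_rowStochastic {S : Type*} [Fintype S] [DecidableEq S]
    {M : Matrix S S ℝ} (hM : M ∈ rowStochastic ℝ S) {η : ℝ} (hη : |η| < 1) :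
    Summable fun t : ℕ => (η • M) ^ t := by
  refine Pi.summable.mpr fun i => Pi.summable.mpr fun j => ?_
  refine .of_norm_bounded (summable_geometric_of_lt_one (abs_nonneg η) hη) fun t => ?_
  have hpow : M ^ t ∈ rowStochastic ℝ S := pow_mem hM t
  rw [smul_pow, Matrix.smul_apply, smul_eq_mul, norm_mul, norm_pow, Real.norm_eq_abs,
    Real.norm_of_nonneg (nonneg_of_mem_rowStochastic hpow)]
  exact mul_le_of_le_one_right (by positivity) (le_one_of_mem_rowStochastic hpow)

end NeumannSeries

section Policy

open Matrix

variable {S A : Type*} [Fintype S] [Fintype A] {P : S → A → S → ℝ} {π : S → A → ℝ}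

theorem Mmat_mulVec_apply (P : S → A → S → ℝ) (π : S → A → ℝ) (W : S → ℝ) (s : S) :
    (Mmat P π *ᵥ W) s = ∑ a, π s a * ∑ s', P s a s' * W s' := by
  simp only [mulVec, dotProduct, Mmat, Finset.sum_mul, Finset.mul_sum, mul_assoc]
  exact Finset.sum_comm

variable [DecidableEq S]

theorem Mmat_mem_rowStochastic (hP0 : ∀ s a s', 0 ≤ P s a s') (hP1 : ∀ s a, ∑ s', P s a s' = 1)
    (hπ0 : ∀ s a, 0 ≤ π s a) (hπ1 : ∀ s, ∑ a, π s a = 1) :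
    Mmat P π ∈ rowStochastic ℝ S := by
  refine mem_rowStochastic.mpr
    ⟨fun s s' => Finset.sum_nonneg fun a _ => mul_nonneg (hπ0 s a) (hP0 s a s'), funext fun s => ?_⟩
  simp only [Mmat_mulVec_apply, Pi.one_apply, mul_one, hP1, hπ1]

theorem sum_mul_bellman_residual (P : S → A → S → ℝ) (r : S → A → ℝ) (η : ℝ)
    (hπ1 : ∀ s, ∑ a, π s a = 1) (W : S → ℝ) :
    (fun s => ∑ a, π s a * (r s a + η * ∑ s', P s a s' * W s' - W s)) =
      rvec r π - (1 - η • Mmat P π) *ᵥ W := by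
  ext s
  calc ∑ a, π s a * (r s a + η * ∑ s', P s a s' * W s' - W s)
    _ = rvec r π s + η * ∑ a, π s a * ∑ s', P s a s' * W s' - (∑ a, π s a) * W s := by
      simp only [rvec, mul_sub, mul_add, Finset.sum_sub_distrib, Finset.sum_add_distrib,
        Finset.sum_mul, Finset.mul_sum, mul_left_comm η]
    _ = rvec r π s - (W s - η * (Mmat P π *ᵥ W) s) := by
      rw [hπ1, one_mul, Mmat_mulVec_apply, sub_sub_eq_add_sub]
    _ = _ := by
      simp only [sub_mulVec, one_mulVec, smul_mulVec, Pi.sub_apply, Pi.smul_apply, smul_eq_mul]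

variable {η : ℝ}

theorem Vval_eq_tsum_mulVec (hs : Summable fun t : ℕ => (η • Mmat P π) ^ t) (r : S → A → ℝ) :
    Vval P r η π = (∑' t : ℕ, (η • Mmat P π) ^ t) *ᵥ rvec r π := by
  ext s
  have hsum := Pi.hasSum.mp (hasSum_mulVec hs.hasSum (rvec r π)) s
  rw [← hsum.tsum_eq]
  simp only [Vval, smul_pow, smul_mulVec, Pi.smul_apply, smul_eq_mul]

theorem dvisit_eq_smul_vecMul_tsum (hs : Summable fun t : ℕ => (η • Mmat P π) ^ t) (μ : S → ℝ) :
    dvisit P η π μ = (1 - η) • μ ᵥ* ∑' t : ℕ, (η • Mmat P π) ^ t := by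
  ext s
  have hsum := Pi.hasSum.mp (hasSum_vecMul hs.hasSum μ) s
  rw [Pi.smul_apply, smul_eq_mul, ← hsum.tsum_eq]
  simp only [dvisit, smul_pow, vecMul_smul, Pi.smul_apply, smul_eq_mul]

theorem dvisit_dotProduct_rvec (hs : Summable fun t : ℕ => (η • Mmat P π) ^ t) (r : S → A → ℝ)
    (μ : S → ℝ) :
    dvisit P η π μ ⬝ᵥ rvec r π = (1 - η) * (μ ⬝ᵥ Vval P r η π) := by
  rw [dvisit_eq_smul_vecMul_tsum hs, Vval_eq_tsum_mulVec hs, smul_dotProduct, smul_eq_mul,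
    dotProduct_mulVec]

theorem dvisit_vecMul_one_sub (hs : Summable fun t : ℕ => (η • Mmat P π) ^ t) (μ : S → ℝ) :
    dvisit P η π μ ᵥ* (1 - η • Mmat P π) = (1 - η) • μ := by
  rw [dvisit_eq_smul_vecMul_tsum hs, smul_vecMul, vecMul_vecMul, hs.tsum_pow_mul_one_sub,
    vecMul_one]

theorem performance_difference_identity_general
    (hs : Summable fun t : ℕ => (η • Mmat P π) ^ t) (hη : η ≠ 1) (hπ1 : ∀ s, ∑ a, π s a = 1)
    (r : S → A → ℝ) (μ W : S → ℝ) :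
    ∑ s, μ s * Vval P r η π s - ∑ s, μ s * W s =
      (1 / (1 - η)) * ∑ s, dvisit P η π μ s *
        ∑ a, π s a * (r s a + η * ∑ s', P s a s' * W s' - W s) := by
  have hη' : 1 - η ≠ 0 := sub_ne_zero.mpr hη.symm
  have hpair : dvisit P η π μ ⬝ᵥ (rvec r π - (1 - η • Mmat P π) *ᵥ W) =
      (1 - η) * (μ ⬝ᵥ Vval P r η π - μ ⬝ᵥ W) := by
    rw [dotProduct_sub, dvisit_dotProduct_rvec hs, dotProduct_mulVec, dvisit_vecMul_one_sub hs,
      smul_dotProduct, smul_eq_mul, mul_sub]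
  rw [← sum_mul_bellman_residual P r η hπ1 W] at hpair
  rw [one_div, eq_inv_mul_iff_mul_eq₀ hη']
  exact hpair.symm

end Policy

/-- Performance difference identity. -/
theorem performance_difference_identity
    {S A : Type*} [Fintype S] [DecidableEq S] [Fintype A] [Nonempty S] [Nonempty A]
    (P : S → A → S → ℝ) (hP0 : ∀ s a s', 0 ≤ P s a s') (hP1 : ∀ s a, ∑ s', P s a s' = 1)
    (r : S → A → ℝ) (Rmax : ℝ) (hRmax : 0 ≤ Rmax) (hr : ∀ s a, |r s a| ≤ Rmax)
    (η : ℝ) (hη0 : 0 < η) (hη1 : η < 1)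
    (π π' : S → A → ℝ)
    (hπ0 : ∀ s a, 0 ≤ π s a) (hπ1 : ∀ s, ∑ a, π s a = 1)
    (hπ'0 : ∀ s a, 0 ≤ π' s a) (hπ'1 : ∀ s, ∑ a, π' s a = 1)
    (μ : S → ℝ) (hμ0 : ∀ s, 0 ≤ μ s) (hμ1 : ∑ s, μ s = 1) :
    ∑ s, μ s * Vval P r η π' s - ∑ s, μ s * Vval P r η π s =
      (1 / (1 - η)) * ∑ s, dvisit P η π' μ s * ∑ a, π' s a * Adv P r η π s a := by
  have hs := summable_smul_pow_of_mem_rowStochastic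
    (Mmat_mem_rowStochastic hP0 hP1 hπ'0 hπ'1) (by rwa [abs_of_pos hη0])
  exact performance_difference_identity_general hs hη1.ne hπ'1 r μ (Vval P r η π)
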